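/- For every integer n ≥ 1, 2·(−1)ⁿ ∫₀^∞ x^{2n}·arctan(x)/(e^{2πx} − 1) dx = H_{2n+1}/(2n+1) + ∑_{k=0}^{2n} (−1)^k · C(2n, k) · ζ'(−k), where H_p = ∑_{j=1}^p 1/j is the p-th harmonic number, C(n,k) is the binomial coefficient, and ζ' the derivative of the Riemann zeta function. -/

import Mathlib

open Real MeasureTheory Filter

/-- Hurwitz zeta function ζ(s, a) for real a > 0, via analytic continuation. -/
noncomputable def hurwitzZetaReal (s : ℂ) (a : ℝ) : ℂ :=
  HurwitzZeta.hurwitzZeta (a : UnitAddCircle) s -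
    ∑ k ∈ Finset.range (⌈a⌉₊ - 1), ((a - (⌈a⌉₊ - 1) + k : ℝ) : ℂ) ^ (-s)

/-- ζ'(-1, a): derivative of the Hurwitz zeta function w.r.t. s at s = -1. -/
noncomputable def hurwitzZetaDerivNegOne (a : ℝ) : ℂ :=
  deriv (fun s => hurwitzZetaReal s a) (-1)

/-- Logarithm of the Glaisher–Kinkelin constant: log A = 1/12 - ζ'(-1). -/
noncomputable def logA : ℂ := 1 / 12 - deriv riemannZeta (-1)

/-- log G(z+1) for z > 0, via log G(z+1) = z log Γ(z) + ζ'(-1) - ζ'(-1, z). -/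
noncomputable def logBarnesG1p (z : ℝ) : ℂ :=
  z * Real.log (Real.Gamma z) + deriv riemannZeta (-1) - hurwitzZetaDerivNegOne z

/-- log G(x) for x > 0, via the recurrence G(z+1) = Γ(z) G(z) on (0, 1]. -/
noncomputable def logBarnesG (x : ℝ) : ℂ :=
  if x ≤ 1 then logBarnesG1p x - Real.log (Real.Gamma x) else logBarnesG1p (x - 1)

/-- The Barnes G-function (for positive real argument). -/
noncomputable def barnesG (x : ℝ) : ℂ := Complex.exp (logBarnesG x)

/-- The digamma function ψ = (log Γ)'. -/
noncomputable def digamma (x : ℝ) : ℝ := deriv (fun t => Real.log (Real.Gamma t)) x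

/-- The trigamma function ψ⁽¹⁾ = (log Γ)''. -/
noncomputable def trigamma (x : ℝ) : ℝ :=
  deriv (deriv (fun t => Real.log (Real.Gamma t))) x

/-- The Clausen function Cl₂(x) = ∑_{k ≥ 1} sin(k x) / k². -/
noncomputable def clausen2 (x : ℝ) : ℝ := ∑' k : ℕ, Real.sin ((k + 1) * x) / (k + 1) ^ 2

/-- Catalan's constant. -/
noncomputable def catalanConst : ℝ := ∑' k : ℕ, (-1 : ℝ) ^ k / (2 * (k : ℝ) + 1) ^ 2

lemma aux_gamma_integrable {a : ℝ} (ha : 0 < a) {r : ℝ} (hr : 0 < r) :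
    IntegrableOn (fun t : ℝ => t ^ (a - 1) * Real.exp (-(r * t))) (Set.Ioi 0) := by
  have := integrableOn_rpow_mul_exp_neg_mul_rpow (p := 1) (s := a - 1) (b := r) (by linarith) (by norm_num) hr
  simpa using this

lemma aux_gamma_integrable_c {a : ℂ} (ha : 0 < a.re) {r : ℂ} (hr : 0 < r.re) :
    IntegrableOn (fun t : ℝ => (t : ℂ) ^ (a - 1) * Complex.exp (-(r * t))) (Set.Ioi 0) := by
  refine Integrable.mono' (aux_gamma_integrable ha hr) ?_ ?_
  · refine ContinuousOn.aestronglyMeasurable ?_ measurableSet_Ioi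
    refine ContinuousOn.mul (fun t ht => ContinuousAt.continuousWithinAt ?_) (by fun_prop)
    exact (Complex.continuousAt_ofReal_cpow_const _ _ (Or.inr (ne_of_gt ht)))
  · filter_upwards [ae_restrict_mem measurableSet_Ioi] with t ht
    rw [norm_mul, Complex.norm_cpow_eq_rpow_re_of_pos ht, Complex.norm_exp]
    simp

lemma aux_gamma_complex {a : ℂ} (ha : 0 < a.re) {r : ℂ} (hr : 0 < r.re) :
    ∫ t : ℝ in Set.Ioi 0, (t : ℂ) ^ (a - 1) * Complex.exp (-(r * t)) = (1 / r) ^ a * Complex.Gamma a := by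
  set U : Set ℂ := {r : ℂ | 0 < r.re} with hU
  have hUo : IsOpen U := isOpen_lt continuous_const Complex.continuous_re
  have hUc : IsPreconnected U := (convex_halfSpace_re_gt 0).isPreconnected
  have hF : AnalyticOnNhd ℂ (fun r : ℂ => ∫ t : ℝ in Set.Ioi 0, (t : ℂ) ^ (a - 1) * Complex.exp (-(r * t))) U := by
    refine DifferentiableOn.analyticOnNhd ?_ hUo
    intro r hr
    have hr : 0 < r.re := hr
    refine DifferentiableAt.differentiableWithinAt ?_
    refine (hasDerivAt_integral_of_dominated_loc_of_deriv_le
      (F := fun r (t : ℝ) => (t : ℂ) ^ (a - 1) * Complex.exp (-(r * t)))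
      (F' := fun r (t : ℝ) => (t : ℂ) ^ (a - 1) * (Complex.exp (-(r * t)) * (-(1 * t))))
      (s := {z : ℂ | r.re / 2 < z.re})
      (bound := fun t : ℝ => t ^ ((a.re + 1) - 1) * Real.exp (-(r.re / 2 * t))) ?_ ?_ ?_ ?_ ?_ ?_ ?_).2.differentiableAt
    · exact (isOpen_lt continuous_const Complex.continuous_re).mem_nhds (by simp; linarith)
    · filter_upwards [hUo.mem_nhds hr] with z hz
      exact (aux_gamma_integrable_c ha hz).1
    · exact aux_gamma_integrable_c ha hr
    · have := (aux_gamma_integrable_c ha hr).1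
      have h2 : AEStronglyMeasurable (fun t : ℝ => (-(1 * t) : ℂ)) (volume.restrict (Set.Ioi 0)) := by
        apply Continuous.aestronglyMeasurable; fun_prop
      refine (this.mul h2).congr (Eventually.of_forall fun t => ?_)
      simp [mul_assoc]
    · filter_upwards [ae_restrict_mem measurableSet_Ioi] with t ht z hz
      have ht : 0 < t := ht
      have hz : r.re / 2 < z.re := hz
      rw [norm_mul, Complex.norm_cpow_eq_rpow_re_of_pos ht, norm_mul, Complex.norm_exp]
      have : t ^ (a.re + 1 - 1) = t ^ (a.re - 1) * t := by
        rw [show a.re + 1 - 1 = (a.re - 1) + 1 by ring, Real.rpow_add_one ht.ne']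
      rw [this]
      simp [abs_of_pos ht]
      rw [mul_assoc, mul_comm t]
      gcongr
    · exact aux_gamma_integrable (by linarith) (by linarith)
    · filter_upwards with t z hz
      exact ((((hasDerivAt_id z).mul_const (t : ℂ)).neg).cexp).const_mul _
  have hG : AnalyticOnNhd ℂ (fun r : ℂ => (1 / r) ^ a * Complex.Gamma a) U := by
    refine DifferentiableOn.analyticOnNhd ?_ hUo
    intro r hr
    have hr : 0 < r.re := hr
    have h0 : r ≠ 0 := by rintro rfl; simp at hr
    refine DifferentiableAt.differentiableWithinAt ?_
    refine DifferentiableAt.mul_const ?_ _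
    refine DifferentiableAt.cpow_const (by fun_prop (disch := exact h0)) ?_
    left
    rw [one_div, Complex.inv_re]
    exact div_pos hr (Complex.normSq_pos.2 h0)
  refine hF.eqOn_of_preconnected_of_frequently_eq hG hUc (z₀ := 1) (by simp [hU]) ?_ hr
  have h1 : Tendsto (fun t : ℝ => (t : ℂ)) (nhdsWithin 1 (Set.Ioi 1)) (nhdsWithin 1 {1}ᶜ) := by
    refine tendsto_nhdsWithin_of_tendsto_nhds_of_eventually_within _ ?_ ?_
    · exact (Complex.continuous_ofReal.tendsto' 1 1 (by simp)).mono_left nhdsWithin_le_nhds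
    · filter_upwards [self_mem_nhdsWithin] with t ht
      have : (1 : ℝ) < t := ht
      simp
      exact_mod_cast this.ne'
  refine h1.frequently (Eventually.frequently ?_)
  filter_upwards [self_mem_nhdsWithin] with t ht
  have : (1 : ℝ) < t := ht
  exact Complex.integral_cpow_mul_exp_neg_mul_Ioi ha (by linarith)

lemma aux_sin_exp_integrable (t : ℝ) {a : ℝ} (ha : 0 < a) :
    IntegrableOn (fun x : ℝ => Real.sin (t * x) * Real.exp (-(a * x))) (Set.Ioi 0) := by
  have := exp_neg_integrableOn_Ioi 0 ha
  refine Integrable.mono' this (by apply Continuous.aestronglyMeasurable; fun_prop) ?_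
  filter_upwards with x
  rw [norm_mul, Real.norm_eq_abs, Real.norm_eq_abs, Real.abs_exp, neg_mul]
  exact mul_le_of_le_one_left (Real.exp_pos _).le (Real.abs_sin_le_one _)

lemma aux_sin_exp (t : ℝ) {a : ℝ} (ha : 0 < a) :
    ∫ x : ℝ in Set.Ioi 0, Real.sin (t * x) * Real.exp (-(a * x)) = t / (a ^ 2 + t ^ 2) := by
  have hre : ((-a : ℂ) + t * Complex.I).re < 0 := by simp [ha]
  have h := integral_exp_mul_complex_Ioi hre 0
  have hi := integrableOn_exp_mul_complex_Ioi hre 0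
  have h2 := congrArg Complex.im h
  have h3 : ∀ x : ℝ, (Complex.exp (((-a : ℂ) + t * Complex.I) * x)).im = Real.sin (t * x) * Real.exp (-(a * x)) := by
    intro x
    rw [Complex.exp_im]
    simp [mul_comm]
  rw [← Complex.imCLM_apply, ← ContinuousLinearMap.integral_comp_comm _ hi] at h2
  simp only [Complex.imCLM_apply, h3] at h2
  rw [h2]
  simp [Complex.div_im, Complex.normSq]
  ring

lemma aux_weight {x : ℝ} (hx : 0 < x) : 2 * x * Real.exp x ≤ Real.exp (2 * π * x) - 1 := by
  have h1 : Real.exp (2 * x) ≤ Real.exp (2 * π * x) := by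
    apply Real.exp_le_exp.2
    nlinarith [Real.pi_gt_three]
  have h2 : Real.exp (2 * x) = Real.exp x * Real.exp x := by rw [← Real.exp_add]; ring_nf
  have h3 := Real.self_le_sinh_iff.2 hx.le
  rw [Real.sinh_eq] at h3
  have h4 : Real.exp x * Real.exp (-x) = 1 := by rw [← Real.exp_add]; simp
  nlinarith [Real.exp_pos x]

lemma aux_weight_pos {x : ℝ} (hx : 0 < x) : 0 < Real.exp (2 * π * x) - 1 :=
  lt_of_lt_of_le (by positivity) (aux_weight hx)

lemma aux_weight' {x : ℝ} (hx : 0 < x) : x / (Real.exp (2 * π * x) - 1) ≤ Real.exp (-x) := by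
  rw [div_le_iff₀ (aux_weight_pos hx), Real.exp_neg, inv_mul_eq_div, le_div_iff₀ (Real.exp_pos x)]
  have := aux_weight hx
  have : 0 < x * Real.exp x := by positivity
  linarith

lemma aux_geom {y : ℝ} (hy : 0 < y) : HasSum (fun m : ℕ => Real.exp (-((m + 1 : ℝ) * y))) (1 / (Real.exp y - 1)) := by
  have h := hasSum_geometric_of_lt_one (r := Real.exp (-y)) (Real.exp_pos _).le (by simpa using hy)
  have h1 : Real.exp y - 1 ≠ 0 := by
    have := Real.add_one_lt_exp hy.ne'
    linarith
  have h2 : Real.exp y ≠ 0 := (Real.exp_pos _).ne'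
  convert! h.mul_left (Real.exp (-y)) using 1
  · funext m
    rw [← Real.exp_nat_mul, ← Real.exp_add]; ring_nf
  · have h3 : 1 - (Real.exp y)⁻¹ ≠ 0 := by
      intro h; apply h1; field_simp at h; simpa using h
    rw [Real.exp_neg]
    field_simp

lemma aux_coth {t : ℝ} (ht : 0 < t) :
    HasSum (fun m : ℕ => t / ((2 * π * (m + 1)) ^ 2 + t ^ 2)) (1 / 4 + 1 / (Real.exp t - 1) / 2 - 1 / t / 2) := by
  set z : ℂ := (t / (2 * π) : ℝ) * Complex.I with hz
  have hmem : z ∈ Complex.integerComplement := by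
    rintro ⟨n, hn⟩
    have := congrArg Complex.im hn
    rw [hz, Complex.im_ofReal_mul, Complex.I_im, Complex.intCast_im, mul_one] at this
    have h0 : 0 < t / (2 * π) := by positivity
    exact h0.ne this
  have hs := (summable_cotTerm hmem).hasSum
  have h1 := cot_series_rep' hmem
  change _ = ∑' n : ℕ, cotTerm z n at h1
  rw [← h1, Complex.cot_pi_eq_exp_ratio] at hs
  have hpi : (π : ℂ) ≠ 0 := by exact_mod_cast Real.pi_ne_zero
  have htc : (t : ℂ) ≠ 0 := by exact_mod_cast ht.ne'
  have he : 2 * π * Complex.I * z = -t := by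
    rw [hz]; push_cast
    field_simp
    linear_combination Complex.I_sq
  rw [he] at hs
  have h5 : Real.exp t - 1 ≠ 0 := by
    have := Real.add_one_lt_exp ht.ne'
    linarith
  have h6 : Complex.exp t - 1 ≠ 0 := by exact_mod_cast h5
  have h7 : 1 - Complex.exp (-t) ≠ 0 := by
    rw [Complex.exp_neg]
    intro h; apply h6; field_simp at h; simpa using h
  rw [← Complex.hasSum_ofReal] 
  convert! hs.mul_left (Complex.I / (4 * π)) using 1
  · funext m
    rw [cotTerm_identity hmem]
    have e : (z + (m + 1)) * (z - (m + 1)) = - (((2 * π * (m + 1)) ^ 2 + t ^ 2) / (2 * π) ^ 2 : ℝ) := by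
      rw [hz]; push_cast
      field_simp
      linear_combination (t : ℂ)^2 * Complex.I_sq
    rw [e, hz]
    have : (((2 * π * (m + 1)) ^ 2 + t ^ 2 : ℝ) : ℂ) ≠ 0 := by
      have : 0 < (2 * π * (m + 1)) ^ 2 + t ^ 2 := by positivity
      exact_mod_cast this.ne'
    push_cast at this ⊢
    generalize (2 * (π : ℂ) * (m + 1)) ^ 2 + (t : ℂ) ^ 2 = D at this ⊢
    field_simp
    rw [Complex.I_sq]; ring
  · push_cast
    rw [hz, Complex.exp_neg] 
    rw [Complex.exp_neg] at h7
    push_cast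
    have h8 := Complex.exp_ne_zero (t : ℂ)
    rw [show (Complex.exp (t : ℂ))⁻¹ = 1 / Complex.exp (t : ℂ) by simp] at h7 ⊢
    have h9 : (1 / Complex.exp (t : ℂ) + 1) / (Complex.I * (1 - 1 / Complex.exp (t : ℂ))) =
        (1 + Complex.exp (t : ℂ)) / (Complex.I * (Complex.exp (t : ℂ) - 1)) := by
      field_simp
    rw [h9]
    generalize Complex.exp (t : ℂ) = E at h6 ⊢
    field_simp
    ring

lemma aux_S {t : ℝ} (ht : 0 < t) :
    ∫ x : ℝ in Set.Ioi 0, Real.sin (t * x) / (Real.exp (2 * π * x) - 1) = 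
      1 / 4 + 1 / (Real.exp t - 1) / 2 - 1 / t / 2 := by
  have hint : ∀ m : ℕ, IntegrableOn (fun x : ℝ => Real.sin (t * x) * Real.exp (-((2 * π * (m + 1)) * x))) (Set.Ioi 0) :=
    fun m => aux_sin_exp_integrable t (by positivity)
  have h := hasSum_integral_of_summable_integral_norm (μ := volume.restrict (Set.Ioi 0)) hint ?_
  · have e : ∀ m : ℕ, ∫ x : ℝ in Set.Ioi 0, Real.sin (t * x) * Real.exp (-((2 * π * (m + 1)) * x)) = _ :=
      fun m => aux_sin_exp t (by positivity)
    simp_rw [e] at h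
    rw [← h.unique (aux_coth ht)]
    refine setIntegral_congr_fun measurableSet_Ioi fun x hx => ?_
    have hx : 0 < x := hx
    have := (aux_geom (y := 2 * π * x) (by positivity)).mul_left (Real.sin (t * x))
    rw [mul_one_div] at this
    rw [← this.tsum_eq]
    congr 1; funext m; ring_nf
  · have hb : Summable (fun m : ℕ => t * (1 / (2 * π) ^ 2 * (1 / ((m : ℝ) + 1) ^ 2))) := by
      refine Summable.mul_left _ (Summable.mul_left _ ?_)
      have := (summable_nat_add_iff 1).2 (Real.summable_one_div_nat_pow.2 (by norm_num : 1 < 2))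
      simpa using this
    refine Summable.of_nonneg_of_le (fun m => integral_nonneg fun _ => norm_nonneg _) (fun m => ?_) hb
    have hg := aux_gamma_integrable (a := 2) (by norm_num) (r := 2 * π * (m + 1)) (by positivity)
    have hv := Real.integral_rpow_mul_exp_neg_mul_Ioi (a := 2) (by norm_num) (r := 2 * π * (m + 1)) (by positivity)
    calc _ ≤ ∫ x : ℝ in Set.Ioi 0, t * (x ^ ((2:ℝ) - 1) * Real.exp (-((2 * π * (m + 1)) * x))) := by
          refine setIntegral_mono_on (hint m).norm (hg.const_mul t) measurableSet_Ioi fun x hx => ?_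
          have hx : 0 < x := hx
          rw [norm_mul, Real.norm_eq_abs, Real.norm_eq_abs, Real.abs_exp, show (2:ℝ) - 1 = 1 by norm_num, Real.rpow_one, ← mul_assoc]
          gcongr
          exact Real.abs_sin_le_abs.trans (by rw [abs_of_pos (by positivity)])
      _ = _ := by
          rw [integral_const_mul, hv]
          rw [Real.Gamma_two]
          have : (1 / (2 * π * (m + 1))) ^ (2:ℝ) = (1 / (2 * π * ((m:ℝ) + 1))) ^ 2 := by
            exact_mod_cast Real.rpow_natCast _ 2
          rw [this]
          field_simp

lemma aux_poly_exp (N : ℕ) : IntegrableOn (fun x : ℝ => (1 + x) ^ N * Real.exp (-x)) (Set.Ioi 0) := by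
  have := (exp_neg_integrableOn_Ioi 0 (b := 1 / 2) (by norm_num)).const_mul (N.factorial * 2 ^ N * Real.exp (1 / 2))
  refine Integrable.mono' this (by apply Continuous.aestronglyMeasurable; fun_prop) ?_
  filter_upwards [ae_restrict_mem measurableSet_Ioi] with x hx
  have hx : 0 < x := hx
  have h := Real.pow_div_factorial_le_exp ((1 + x) / 2) (by positivity) N
  rw [div_le_iff₀ (by positivity), div_pow, div_le_iff₀ (by positivity)] at h
  rw [Real.norm_of_nonneg (by positivity)]
  calc _ ≤ (Real.exp ((1 + x) / 2) * N.factorial * 2 ^ N) * Real.exp (-x) := by gcongr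
    _ = N.factorial * 2 ^ N * (Real.exp ((1 + x) / 2) * Real.exp (-x)) := by ring
    _ = _ := by
      rw [← Real.exp_add, mul_assoc _ (Real.exp _) (Real.exp _), ← Real.exp_add]; ring_nf

lemma aux_arg (y : ℝ) : Complex.arg (1 + y * Complex.I) = Real.arctan y := by
  rw [Complex.arg_of_re_nonneg (by simp), Real.arctan_eq_arcsin]
  congr 1
  have : ‖(1 + y * Complex.I : ℂ)‖ = √(1 + y ^ 2) := by
    simpa using Complex.norm_add_mul_I 1 y
  rw [this]; simp

lemma aux_norm (y : ℝ) : 1 ≤ ‖(1 + y * Complex.I : ℂ)‖ ∧ ‖(1 + y * Complex.I : ℂ)‖ ≤ 1 + |y| := by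
  constructor
  · have := Complex.re_le_norm (1 + y * Complex.I : ℂ)
    simpa using this
  · refine (norm_add_le _ _).trans ?_
    simp

lemma aux_abs_arctan (y : ℝ) : |Real.arctan y| ≤ |y| := by
  have key : ∀ y : ℝ, 0 ≤ y → Real.arctan y ≤ y := by
    intro y hy
    have h1 := Real.arctan_nonneg.2 hy
    have := Real.le_tan h1 (Real.arctan_lt_pi_div_two y)
    rwa [Real.tan_arctan] at this
  rcases le_total 0 y with h | h
  · rw [abs_of_nonneg h, abs_of_nonneg (Real.arctan_nonneg.2 h)]; exact key y h
  · have := key (-y) (by linarith)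
    have h2 := Real.arctan_nonneg.2 (by linarith : 0 ≤ -y)
    rw [Real.arctan_neg] at *
    rw [abs_of_nonpos h, abs_of_nonpos (by linarith)]; exact this

lemma aux_log (y : ℝ) : ‖Complex.log (1 + y * Complex.I)‖ ≤ 2 * |y| := by
  have h := Complex.norm_le_abs_re_add_abs_im (Complex.log (1 + y * Complex.I))
  rw [Complex.log_re, Complex.log_im, aux_arg] at h
  obtain ⟨h1, h2⟩ := aux_norm y
  have h3 : |Real.log ‖(1 + y * Complex.I : ℂ)‖| ≤ |y| := by
    rw [abs_of_nonneg (Real.log_nonneg h1)]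
    have := Real.log_le_sub_one_of_pos (lt_of_lt_of_le one_pos h1)
    linarith
  have := aux_abs_arctan y
  linarith

lemma aux_ne (y : ℝ) : (1 + y * Complex.I : ℂ) ≠ 0 := by
  intro h
  have := congrArg Complex.re h
  simp at this

lemma aux_cpow (y : ℝ) {s : ℂ} {N : ℕ} (hs : ‖s‖ ≤ N) :
    ‖(1 + y * Complex.I : ℂ) ^ (-s)‖ ≤ (1 + |y|) ^ N * Real.exp (π * N) := by
  obtain ⟨h1, h2⟩ := aux_norm y
  rw [Complex.norm_cpow_of_ne_zero (aux_ne y), div_eq_mul_inv, ← Real.exp_neg]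
  have hre := (Complex.abs_re_le_norm s).trans hs
  have him := (Complex.abs_im_le_norm s).trans hs
  gcongr
  · calc _ ≤ ‖(1 + y * Complex.I : ℂ)‖ ^ (N : ℝ) := by
          apply Real.rpow_le_rpow_of_exponent_le h1
          simp; linarith [neg_le_abs s.re]
      _ ≤ _ := by rw [Real.rpow_natCast]; gcongr
  · refine (le_abs_self _).trans ?_
    rw [abs_neg, abs_mul, Complex.neg_im, abs_neg]
    gcongr
    exact Complex.abs_arg_le_pi _

/-- the integrand in Hermite's formula -/
noncomputable def hermH (s : ℂ) (x : ℝ) : ℂ :=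
  ((1 + (-x : ℝ) * Complex.I) ^ (-s) - (1 + x * Complex.I) ^ (-s)) / (Complex.I * (Real.exp (2 * π * x) - 1 : ℝ))

/-- its derivative -/
noncomputable def hermD (s : ℂ) (x : ℝ) : ℂ :=
  ((1 + x * Complex.I) ^ (-s) * Complex.log (1 + x * Complex.I)
    - (1 + (-x : ℝ) * Complex.I) ^ (-s) * Complex.log (1 + (-x : ℝ) * Complex.I)) /
      (Complex.I * (Real.exp (2 * π * x) - 1 : ℝ))

lemma herm_deriv (s : ℂ) (x : ℝ) : HasDerivAt (fun s => hermH s x) (hermD s x) s := by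
  have h : ∀ y : ℝ, HasDerivAt (fun s : ℂ => (1 + y * Complex.I : ℂ) ^ (-s))
      ((1 + y * Complex.I : ℂ) ^ (-s) * Complex.log (1 + y * Complex.I) * (-1)) s := by
    intro y
    exact (hasDerivAt_neg s).const_cpow (Or.inl (aux_ne y))
  convert! ((h (-x)).sub (h x)).div_const (Complex.I * (Real.exp (2 * π * x) - 1 : ℝ)) using 1
  unfold hermD
  ring

lemma hermD_bound {s : ℂ} {N : ℕ} (hs : ‖s‖ ≤ N) {x : ℝ} (hx : 0 < x) :
    ‖hermD s x‖ ≤ 4 * Real.exp (π * N) * ((1 + x) ^ N * Real.exp (-x)) := by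
  unfold hermD
  have hw := aux_weight_pos hx
  rw [norm_div, norm_mul, Complex.norm_I, one_mul, Complex.norm_real, Real.norm_of_nonneg hw.le]
  have h : ∀ y : ℝ, |y| = x → ‖(1 + y * Complex.I : ℂ) ^ (-s) * Complex.log (1 + y * Complex.I)‖ ≤
      ((1 + x) ^ N * Real.exp (π * N)) * (2 * x) := by
    intro y hy
    rw [norm_mul, ← hy]
    gcongr
    · exact aux_cpow y hs
    · exact aux_log y
  have h1 := h x (abs_of_pos hx)
  have h2 := h (-x) (by rw [abs_neg, abs_of_pos hx])
  calc _ ≤ (((1 + x) ^ N * Real.exp (π * N)) * (2 * x) + ((1 + x) ^ N * Real.exp (π * N)) * (2 * x)) / (Real.exp (2 * π * x) - 1) := by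
        gcongr
        exact (norm_sub_le _ _).trans (add_le_add h1 h2)
    _ = 4 * Real.exp (π * N) * (1 + x) ^ N * (x / (Real.exp (2 * π * x) - 1)) := by ring
    _ ≤ 4 * Real.exp (π * N) * (1 + x) ^ N * Real.exp (-x) := by
        gcongr; exact aux_weight' hx
    _ = _ := by ring

lemma hermH_bound {s : ℂ} {N : ℕ} (hs : ‖s‖ ≤ N) {x : ℝ} (hx : 0 < x) :
    ‖hermH s x‖ ≤ 4 * Real.exp (π * N) * ((1 + x) ^ N * Real.exp (-x)) * N := by
  have h := (convex_closedBall (0 : ℂ) N).norm_image_sub_le_of_norm_hasDerivWithin_le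
    (f := fun s => hermH s x) (f' := fun s => hermD s x) (x := 0) (y := s)
    (fun z _ => (herm_deriv z x).hasDerivWithinAt)
    (fun z hz => hermD_bound (N := N) (by simpa using hz) hx) (by simp) (by simpa using hs)
  have h0 : hermH 0 x = 0 := by simp [hermH]
  simp only [h0, sub_zero] at h
  refine h.trans ?_
  gcongr

lemma aux_meas_cpow (s : ℂ) : Continuous (fun y : ℝ => (1 + y * Complex.I : ℂ) ^ (-s)) := by
  refine Continuous.cpow (by fun_prop) continuous_const fun y => ?_
  left; simp

lemma aux_meas_log : Continuous (fun y : ℝ => Complex.log (1 + y * Complex.I : ℂ)) := by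
  refine Continuous.clog (by fun_prop) fun y => ?_
  left; simp

lemma hermH_meas (s : ℂ) : Measurable (hermH s) := by
  unfold hermH
  have h1 := (aux_meas_cpow s).measurable
  have h2 := ((aux_meas_cpow s).comp continuous_neg).measurable
  refine (h2.sub h1).div ?_
  fun_prop

lemma hermD_meas (s : ℂ) : Measurable (hermD s) := by
  unfold hermD
  have h1 := ((aux_meas_cpow s).mul aux_meas_log).measurable
  have h2 := (((aux_meas_cpow s).mul aux_meas_log).comp continuous_neg).measurable
  refine (h1.sub h2).div ?_
  fun_prop

lemma hermH_int (s : ℂ) : IntegrableOn (hermH s) (Set.Ioi 0) := by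
  obtain ⟨N, hN⟩ := exists_nat_ge ‖s‖
  refine Integrable.mono' (((aux_poly_exp N).const_mul (4 * Real.exp (π * N))).mul_const (N : ℝ)) (hermH_meas s).aestronglyMeasurable ?_
  filter_upwards [ae_restrict_mem measurableSet_Ioi] with x hx
  exact hermH_bound hN hx

lemma herm_main_deriv (s : ℂ) : IntegrableOn (hermD s) (Set.Ioi 0) ∧
    HasDerivAt (fun s => ∫ x in Set.Ioi 0, hermH s x) (∫ x in Set.Ioi 0, hermD s x) s := by
  obtain ⟨N, hN⟩ := exists_nat_gt ‖s‖
  refine hasDerivAt_integral_of_dominated_loc_of_deriv_le (s := Metric.ball 0 N) 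
    (Metric.isOpen_ball.mem_nhds (by simpa using hN)) 
    (Eventually.of_forall fun z => (hermH_meas z).aestronglyMeasurable) (hermH_int s)
    (hermD_meas s).aestronglyMeasurable ?_ ((aux_poly_exp N).const_mul (4 * Real.exp (π * N))) ?_
  · filter_upwards [ae_restrict_mem measurableSet_Ioi] with x hx z hz
    refine hermD_bound ?_ hx
    have : ‖z‖ < N := by simpa using hz
    exact this.le
  · exact Eventually.of_forall fun x z _ => herm_deriv z x

lemma aux_mellin {s : ℂ} (hs : 1 < s.re) :
    ∫ t : ℝ in Set.Ioi 0, (t : ℂ) ^ (s - 1) * ((Real.exp (-t) * (1 / (Real.exp t - 1)) : ℝ) : ℂ) =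
      Complex.Gamma s * (riemannZeta s - 1) := by
  have hsum : Summable (fun n : ℕ => 1 / ((n : ℝ) + 1) ^ s.re) := by
    have := (summable_nat_add_iff 1).2 (Real.summable_one_div_nat_rpow.2 hs)
    simpa using this
  have h := hasSum_mellin (ι := ℕ) (a := fun _ => 1) (p := fun m => m + 2) (s := s)
    (F := fun t => ((Real.exp (-t) * (1 / (Real.exp t - 1)) : ℝ) : ℂ))
    (fun i => Or.inr (by positivity)) (by linarith) (fun t ht => ?_) ?_
  · have h1 : HasSum (fun n : ℕ => 1 / ((n : ℂ) + 1) ^ s) (riemannZeta s) := by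
      rw [zeta_eq_tsum_one_div_nat_add_one_cpow hs]
      apply Summable.hasSum
      refine Summable.of_norm (hsum.congr fun n => ?_)
      rw [norm_div, norm_one]
      have := Complex.norm_cpow_eq_rpow_re_of_pos (x := (n : ℝ) + 1) (by positivity) s
      push_cast at this
      rw [this]
    have h2 := ((hasSum_nat_add_iff' 1).2 h1).mul_left (Complex.Gamma s)
    refine Eq.trans ?_ (HasSum.unique (f := _) h (h2.congr_fun ?_)) |>.trans ?_
    · simp [mellin]
    · intro n
      push_cast
      rw [mul_div_assoc, add_assoc]; norm_num
    · simp
  · have ht : 0 < t := ht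
    have := (aux_geom ht).mul_left (Real.exp (-t))
    refine (Complex.hasSum_ofReal.2 this).congr_fun fun m => ?_
    rw [one_mul, ← Real.exp_add]; ring_nf
  · have := (summable_nat_add_iff 1).2 hsum
    refine this.congr fun n => ?_
    push_cast
    rw [norm_one, add_assoc]; norm_num

lemma herm_inner {s : ℂ} (hs : 0 < s.re) (x : ℝ) :
    ∫ t : ℝ in Set.Ioi 0, (t : ℂ) ^ (s - 1) * ((Real.exp (-t) * (2 * (Real.sin (t * x) / (Real.exp (2 * π * x) - 1))) : ℝ) : ℂ) =
      Complex.Gamma s * hermH s x := by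
  have hre : ∀ y : ℝ, 0 < (1 + y * Complex.I : ℂ).re := by intro y; simp
  have h1 := aux_gamma_complex hs (hre x)
  have h2 := aux_gamma_complex hs (hre (-x))
  have i1 := aux_gamma_integrable_c hs (hre x)
  have i2 := aux_gamma_integrable_c hs (hre (-x))
  have hc : ∀ y : ℝ, (1 / (1 + y * Complex.I : ℂ)) ^ s = (1 + y * Complex.I : ℂ) ^ (-s) := by
    intro y
    rw [one_div, Complex.inv_cpow, Complex.cpow_neg]
    rw [aux_arg]
    have := Real.arctan_lt_pi_div_two y
    have := Real.pi_pos
    linarith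
  rw [hc] at h1 h2
  have h3 := (integral_sub i2 i1).trans (congrArg₂ _ h2 h1)
  have h4 := congrArg (fun z => z / (Complex.I * (Real.exp (2 * π * x) - 1 : ℝ))) h3
  beta_reduce at h4
  rw [← integral_div] at h4
  refine Eq.trans ?_ (h4.trans ?_)
  · refine setIntegral_congr_fun measurableSet_Ioi fun t ht => ?_
    have e : ∀ y : ℝ, Complex.exp (-((1 + y * Complex.I) * t)) = Complex.exp (-t) * Complex.exp (-((t * y : ℂ) * Complex.I)) := by
      intro y; rw [← Complex.exp_add]; ring_nf
    rw [e, e]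
    push_cast
    rw [Complex.sin]
    rw [show -(↑t * -↑x * Complex.I) = t * x * Complex.I by ring, show - (t * x : ℂ) * Complex.I = -(t * x * Complex.I) by ring]
    generalize Complex.exp (2 * π * x) - 1 = D
    rw [← div_div, Complex.div_I]
    ring
  · unfold hermH
    ring

lemma herm_outer {s : ℂ} (hs : 1 < s.re) :
    ∫ t : ℝ in Set.Ioi 0, (t : ℂ) ^ (s - 1) * ((Real.exp (-t) * (2 * (1 / 4 + 1 / (Real.exp t - 1) / 2 - 1 / t / 2)) : ℝ) : ℂ) =
      Complex.Gamma s * (riemannZeta s - 1 / 2 - 1 / (s - 1)) := by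
  have i1 := aux_gamma_integrable_c (a := s) (r := 1) (by linarith) (by simp)
  have i2 := aux_gamma_integrable_c (a := s - 1) (r := 1) (by simp; linarith) (by simp)
  have v1 := aux_gamma_complex (a := s) (r := 1) (by linarith) (by simp)
  have v2 := aux_gamma_complex (a := s - 1) (r := 1) (by simp; linarith) (by simp)
  have v3 := aux_mellin hs
  have i3 : IntegrableOn (fun t : ℝ => (t : ℂ) ^ (s - 1) * ((Real.exp (-t) * (1 / (Real.exp t - 1)) : ℝ) : ℂ)) (Set.Ioi 0) := by
    refine Integrable.mono' i2.norm ?_ ?_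
    · have : Measurable (fun t : ℝ => (t : ℂ) ^ (s - 1) * ((Real.exp (-t) * (1 / (Real.exp t - 1)) : ℝ) : ℂ)) := by fun_prop
      exact this.aestronglyMeasurable
    · filter_upwards [ae_restrict_mem measurableSet_Ioi] with t ht
      have ht : 0 < t := ht
      have h1 := Real.add_one_lt_exp ht.ne'
      rw [norm_mul, norm_mul, Complex.norm_cpow_eq_rpow_re_of_pos ht, Complex.norm_cpow_eq_rpow_re_of_pos ht, Complex.norm_exp, Complex.norm_real, Real.norm_of_nonneg (by apply mul_nonneg (Real.exp_pos _).le; apply one_div_nonneg.2; linarith)]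
      simp only [Complex.sub_re, Complex.one_re, one_mul, Complex.neg_re, Complex.ofReal_re]
      rw [Real.rpow_sub_one ht.ne' (s.re - 1)]
      calc _ ≤ t ^ (s.re - 1) * (Real.exp (-t) * (1 / t)) := by
            gcongr; linarith
        _ = _ := by ring
  have h := integral_sub ((i1.div_const 2).add i3) i2
  have h' := integral_add (i1.div_const 2) i3
  simp only [Pi.add_apply] at h
  rw [h', integral_div, v1, v2, v3] at h
  refine Eq.trans ?_ (h.trans ?_)
  · refine setIntegral_congr_fun measurableSet_Ioi fun t ht => ?_
    have ht : 0 < t := ht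
    have htc : (t : ℂ) ≠ 0 := by exact_mod_cast ht.ne'
    rw [Complex.cpow_sub (s - 1) 1 htc, Complex.cpow_one]
    push_cast
    rw [one_mul]
    ring
  · have hs1 : s - 1 ≠ 0 := by
      intro h
      have := congrArg Complex.re h
      simp at this; linarith
    have := Complex.Gamma_add_one (s - 1) hs1
    rw [sub_add_cancel] at this
    have h2 : Complex.Gamma (s - 1) = Complex.Gamma s / (s - 1) := by rw [this]; field_simp
    rw [h2]
    simp
    ring

lemma herm_right {s : ℂ} (hs : 1 < s.re) :
    ∫ x : ℝ in Set.Ioi 0, hermH s x = riemannZeta s - 1 / 2 - 1 / (s - 1) := by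
  have hG : Complex.Gamma s ≠ 0 := Complex.Gamma_ne_zero_of_re_pos (by linarith)
  apply mul_left_cancel₀ hG
  rw [← herm_outer hs, ← integral_const_mul]
  simp_rw [← herm_inner (s := s) (by linarith)]
  rw [integral_integral_swap]
  · refine setIntegral_congr_fun measurableSet_Ioi fun t ht => ?_
    have ht : 0 < t := ht
    rw [integral_const_mul, integral_complex_ofReal, integral_const_mul, integral_const_mul, aux_S ht]
  · have hx : IntegrableOn (fun x : ℝ => x / (Real.exp (2 * π * x) - 1)) (Set.Ioi 0) := by
      refine Integrable.mono' (exp_neg_integrableOn_Ioi 0 one_pos) ?_ ?_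
      · have : Measurable (fun x : ℝ => x / (Real.exp (2 * π * x) - 1)) := by fun_prop
        exact this.aestronglyMeasurable
      · filter_upwards [ae_restrict_mem measurableSet_Ioi] with x hx
        rw [Real.norm_of_nonneg (div_nonneg (le_of_lt hx) (aux_weight_pos hx).le)]
        simpa using aux_weight' hx
    have ht := (aux_gamma_integrable (a := s.re + 1) (by linarith) one_pos)
    have hp := (hx.mul_prod ht).const_mul 2
    refine Integrable.mono' hp ?_ ?_
    · have : Measurable (Function.uncurry fun (x t : ℝ) => (t : ℂ) ^ (s - 1) * ((Real.exp (-t) * (2 * (Real.sin (t * x) / (Real.exp (2 * π * x) - 1))) : ℝ) : ℂ)) := by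
        unfold Function.uncurry
        fun_prop
      exact this.aestronglyMeasurable
    · rw [Measure.prod_restrict]
      filter_upwards [ae_restrict_mem (measurableSet_Ioi.prod measurableSet_Ioi)] with ⟨x, t⟩ hxt
      have hx : 0 < x := hxt.1
      have ht : 0 < t := hxt.2
      have hw := aux_weight_pos hx
      simp only [Function.uncurry]
      rw [norm_mul, Complex.norm_cpow_eq_rpow_re_of_pos ht, Complex.norm_real, norm_mul, norm_mul, norm_div, Real.norm_of_nonneg hw.le, Real.norm_of_nonneg (Real.exp_pos _).le]
      have h1 : ‖Real.sin (t * x)‖ ≤ t * x := Real.abs_sin_le_abs.trans (by rw [abs_of_pos (by positivity)])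
      have h2 : t ^ (s.re + 1 - 1) = t ^ (s.re - 1) * t := by
        rw [show s.re + 1 - 1 = (s.re - 1) + 1 by ring, Real.rpow_add_one ht.ne']
      rw [h2]
      simp only [Complex.sub_re, Complex.one_re, one_mul]
      rw [Real.norm_of_nonneg (by norm_num : (0:ℝ) ≤ 2)]
      calc _ ≤ t ^ (s.re - 1) * (Real.exp (-t) * (2 * ((t * x) / (Real.exp (2 * π * x) - 1)))) := by gcongr
        _ = _ := by ring

lemma herm_zeta {s : ℂ} (hs : s ≠ 1) :
    riemannZeta s = (∫ x : ℝ in Set.Ioi 0, hermH s x) + 1 / 2 + 1 / (s - 1) := by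
  have hUo : IsOpen ({1}ᶜ : Set ℂ) := isOpen_compl_singleton
  have h1 : AnalyticOnNhd ℂ riemannZeta {1}ᶜ := by
    refine DifferentiableOn.analyticOnNhd ?_ hUo
    intro z hz
    exact (differentiableAt_riemannZeta hz).differentiableWithinAt
  have h2 : AnalyticOnNhd ℂ (fun s => (∫ x : ℝ in Set.Ioi 0, hermH s x) + 1 / 2 + 1 / (s - 1)) {1}ᶜ := by
    refine DifferentiableOn.analyticOnNhd ?_ hUo
    intro z hz
    refine DifferentiableAt.differentiableWithinAt ?_
    have hz' : z - 1 ≠ 0 := sub_ne_zero.2 hz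
    refine ((herm_main_deriv z).2.differentiableAt.add_const _).add ?_
    fun_prop (disch := exact hz')
  have hc : IsPreconnected ({1}ᶜ : Set ℂ) :=
    (isConnected_compl_singleton_of_one_lt_rank (by simp) 1).isPreconnected
  refine h1.eqOn_of_preconnected_of_eventuallyEq h2 hc (z₀ := 2) (by simp) ?_ hs
  have : {z : ℂ | 1 < z.re} ∈ nhds (2 : ℂ) :=
    (isOpen_lt continuous_const Complex.continuous_re).mem_nhds (by simp)
  filter_upwards [this] with z hz
  rw [herm_right hz]; ring

lemma herm_zeta_deriv (k : ℕ) :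
    deriv riemannZeta (-(k : ℂ)) = (∫ x : ℝ in Set.Ioi 0, hermD (-(k : ℂ)) x) - 1 / ((k : ℂ) + 1) ^ 2 := by
  have hk : (-(k : ℂ)) ≠ 1 := by
    intro h
    have := congrArg Complex.re h
    simp at this
    have : (0 : ℝ) ≤ k := by positivity
    linarith
  have hk' : (-(k : ℂ)) - 1 ≠ 0 := sub_ne_zero.2 hk
  have he : riemannZeta =ᶠ[nhds (-(k : ℂ))] fun s => (∫ x : ℝ in Set.Ioi 0, hermH s x) + 1 / 2 + (s - 1)⁻¹ := by
    filter_upwards [isOpen_compl_singleton.mem_nhds hk] with z hz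
    rw [herm_zeta hz, one_div (z - 1)]
  rw [he.deriv_eq]
  have h := ((herm_main_deriv (-(k : ℂ))).2.add_const (1 / 2 : ℂ)).add (((hasDerivAt_id (-(k : ℂ))).sub_const 1).inv hk')
  refine h.deriv.trans ?_
  simp only [id]
  rw [show (-(k : ℂ) - 1) ^ 2 = (k + 1) ^ 2 by ring]
  ring

lemma aux_choose_div (N k : ℕ) : (N.choose k : ℚ) * (1 / ((k : ℚ) + 1)) = ((N + 1).choose (k + 1) : ℚ) / (N + 1) := by
  have h := Nat.add_one_mul_choose_eq N k
  have h' : ((N : ℚ) + 1) * N.choose k = (N + 1).choose (k + 1) * ((k : ℚ) + 1) := by exact_mod_cast h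
  field_simp
  linarith

lemma harm_sum (N : ℕ) : ∑ k ∈ Finset.range (N + 1), (-1 : ℚ) ^ k * (N.choose k) * (1 / ((k : ℚ) + 1)) = 1 / (N + 1) := by
  simp_rw [mul_assoc, aux_choose_div, ← mul_div_assoc]
  rw [← Finset.sum_div]
  congr 1
  have h := Int.alternating_sum_range_choose_of_ne (n := N + 1) (by omega)
  rw [Finset.sum_range_succ'] at h
  have h' := congrArg (fun z : ℤ => (z : ℚ)) h
  push_cast at h'
  simp only [pow_succ, mul_neg, mul_one, neg_mul, Finset.sum_neg_distrib] at h'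
  simp at h'
  linarith

lemma harm_sum1 (M : ℕ) : ∑ k ∈ Finset.range M, (-1 : ℚ) ^ k * (M.choose (k + 1)) * (1 / ((k : ℚ) + 1)) = harmonic M := by
  induction M with
  | zero => simp
  | succ M ih =>
    rw [harmonic_succ, ← ih]
    have h := harm_sum M
    have h2 : ∑ k ∈ Finset.range M, (-1 : ℚ) ^ k * (M.choose (k + 1)) * (1 / ((k : ℚ) + 1)) =
      ∑ k ∈ Finset.range (M + 1), (-1 : ℚ) ^ k * (M.choose (k + 1)) * (1 / ((k : ℚ) + 1)) := by
      rw [Finset.sum_range_succ]; simp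
    rw [h2]
    push_cast
    rw [← one_div, ← h, ← Finset.sum_add_distrib]
    refine Finset.sum_congr rfl fun k _ => ?_
    rw [Nat.choose_succ_succ]
    push_cast
    ring

lemma harm_sum2 (N : ℕ) : ∑ k ∈ Finset.range (N + 1), (-1 : ℚ) ^ k * (N.choose k) * (1 / ((k : ℚ) + 1) ^ 2) = harmonic (N + 1) / (N + 1) := by
  rw [← harm_sum1, Finset.sum_div]
  refine Finset.sum_congr rfl fun k _ => ?_
  have := aux_choose_div N k
  calc _ = (-1 : ℚ) ^ k * ((N.choose k : ℚ) * (1 / ((k : ℚ) + 1))) * (1 / ((k : ℚ) + 1)) := by field_simp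
    _ = _ := by rw [this]; ring

/-- 2(−1)ⁿ ∫₀^∞ x^{2n} arctan x/(e^{2πx}−1) dx
    = H_{2n+1}/(2n+1) + ∑_{k=0}^{2n} (−1)^k C(2n,k) ζ'(−k). -/
theorem integral_pow_arctan_eq (n : ℕ) (hn : 1 ≤ n) :
    2 * (-1 : ℂ) ^ n *
        ((∫ x in Set.Ioi (0 : ℝ),
            x ^ (2 * n) * Real.arctan x / (Real.exp (2 * π * x) - 1) : ℝ) : ℂ) =
      (harmonic (2 * n + 1) : ℂ) / (2 * (n : ℂ) + 1)
        + ∑ k ∈ Finset.range (2 * n + 1),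
            (-1 : ℂ) ^ k * (Nat.choose (2 * n) k : ℂ) * deriv riemannZeta (-(k : ℂ)) := by
  have hh := congrArg (fun q : ℚ => (q : ℂ)) (harm_sum2 (2 * n))
  beta_reduce at hh
  push_cast at hh
  simp_rw [herm_zeta_deriv, mul_sub]
  rw [Finset.sum_sub_distrib, hh]
  simp_rw [← integral_const_mul]
  rw [← integral_finsetSum _ (fun (k : ℕ) _ => ((herm_main_deriv (-(k : ℂ))).1.const_mul _))]
  rw [← integral_complex_ofReal, ← integral_const_mul]
  rw [add_sub_cancel]
  refine setIntegral_congr_fun measurableSet_Ioi fun x hx => ?_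
  have hx : 0 < x := hx
  have hb : ∀ y : ℝ, ∑ k ∈ Finset.range (2 * n + 1), (-1 : ℂ) ^ k * (Nat.choose (2 * n) k : ℂ) * (1 + y * Complex.I) ^ k = (-1) ^ n * (y : ℂ) ^ (2 * n) := by
    intro y
    have := add_pow (-(1 + y * Complex.I)) 1 (2 * n)
    rw [show -(1 + y * Complex.I) + 1 = -(y * Complex.I) by ring, pow_mul, neg_sq, mul_pow, Complex.I_sq, mul_neg_one, neg_pow, ← pow_mul] at this
    rw [this]
    refine Finset.sum_congr rfl fun k _ => ?_
    rw [neg_pow (1 + y * Complex.I), one_pow]; ring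
  have hl : Complex.log (1 + x * Complex.I) - Complex.log (1 + (-x : ℝ) * Complex.I) = 2 * Real.arctan x * Complex.I := by
    apply Complex.ext
    · rw [Complex.sub_re, Complex.log_re, Complex.log_re]
      have : ‖(1 + (-x : ℝ) * Complex.I : ℂ)‖ = ‖(1 + x * Complex.I : ℂ)‖ := by
        rw [← Complex.norm_conj]; simp
      rw [this]; simp [-Complex.ofReal_arctan]
    · rw [Complex.sub_im, Complex.log_im, Complex.log_im, aux_arg, aux_arg, Real.arctan_neg]
      simp [-Complex.ofReal_arctan]; ring
  have hD : ∀ k : ℕ, hermD (-(k : ℂ)) x = ((1 + x * Complex.I) ^ k * Complex.log (1 + x * Complex.I)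
    - (1 + (-x : ℝ) * Complex.I) ^ k * Complex.log (1 + (-x : ℝ) * Complex.I)) /
      (Complex.I * (Real.exp (2 * π * x) - 1 : ℝ)) := by
    intro k
    unfold hermD
    rw [neg_neg, Complex.cpow_natCast, Complex.cpow_natCast]
  simp only [hD]
  have e : ∑ k ∈ Finset.range (2 * n + 1), (-1 : ℂ) ^ k * (Nat.choose (2 * n) k : ℂ) * (((1 + x * Complex.I) ^ k * Complex.log (1 + x * Complex.I)
    - (1 + (-x : ℝ) * Complex.I) ^ k * Complex.log (1 + (-x : ℝ) * Complex.I)) /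
      (Complex.I * (Real.exp (2 * π * x) - 1 : ℝ))) = 
     ((∑ k ∈ Finset.range (2 * n + 1), (-1 : ℂ) ^ k * (Nat.choose (2 * n) k : ℂ) * (1 + x * Complex.I) ^ k) * Complex.log (1 + x * Complex.I) - (∑ k ∈ Finset.range (2 * n + 1), (-1 : ℂ) ^ k * (Nat.choose (2 * n) k : ℂ) * (1 + (-x : ℝ) * Complex.I) ^ k) * Complex.log (1 + (-x : ℝ) * Complex.I)) / (Complex.I * (Real.exp (2 * π * x) - 1 : ℝ)) := by
    rw [Finset.sum_mul, Finset.sum_mul, ← Finset.sum_sub_distrib, Finset.sum_div]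
    refine Finset.sum_congr rfl fun k _ => ?_
    ring
  rw [e, hb, hb]
  have hev : (((-x : ℝ) : ℂ)) ^ (2 * n) = (x : ℂ) ^ (2 * n) := by
    push_cast; rw [pow_mul, neg_sq, pow_mul]
  rw [hev, ← mul_sub, hl]
  have hw : ((Real.exp (2 * π * x) - 1 : ℝ) : ℂ) ≠ 0 := by exact_mod_cast (aux_weight_pos hx).ne'
  rw [Complex.ofReal_div]
  have hI := Complex.I_ne_zero
  rw [Complex.ofReal_mul, Complex.ofReal_pow]
  field_simp
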